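/- Let n ≥ 4, let L be the permutation group induced by Sym(n) on ordered pairs of distinct elements of {1,…,n}, let (Γ,G) be a locally L pair, and let {x,y} be an edge of Γ. If G_{xy}^{[1]} ≠ 1, then there is a prime p with (n,p) ∈ {(4,2),(5,3),(6,2)} such that G_{xy}^{[1]} is a p-group. -/

import Mathlib

open MulAction Pointwise

/-- The set of ordered pairs of distinct elements of `{1,…,n}`. -/
abbrev OPairs (n : ℕ) : Type := {p : Fin n × Fin n // p.1 ≠ p.2}

/-- `Sym(n)` acts on the ordered pairs of distinct elements. -/
instance opairsAction (n : ℕ) : MulAction (Equiv.Perm (Fin n)) (OPairs n) where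
  smul σ p := ⟨(σ p.1.1, σ p.1.2), fun h => p.2 (σ.injective h)⟩
  one_smul p := rfl
  mul_smul σ τ p := rfl

/-- Every element of `G` is an automorphism of `Γ`. -/
def PreservesAdj {V : Type*} (Γ : SimpleGraph V) (G : Subgroup (Equiv.Perm V)) : Prop :=
  ∀ g ∈ G, ∀ u v : V, Γ.Adj u v ↔ Γ.Adj (g u) (g v)

/-- The pointwise stabiliser in `G` of the ball of radius `i` around `x`. -/
def ballStab {V : Type*} (Γ : SimpleGraph V) (G : Subgroup (Equiv.Perm V)) (x : V) (i : ℕ) :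
    Subgroup G :=
  ⨅ (v : V) (_ : Γ.dist x v ≤ i), MulAction.stabilizer G v

/-- `(Γ, G)` is a locally `L` pair, for `L` the permutation group induced by `Sym(n)` on
ordered pairs of distinct elements of `{1,…,n}`. -/
def IsLocallyOPairs (n : ℕ) {V : Type*} (Γ : SimpleGraph V) (G : Subgroup (Equiv.Perm V)) :
    Prop :=
  PreservesAdj Γ G ∧ MulAction.IsPretransitive G V ∧
  ∀ x : V, ∃ (e : Γ.neighborSet x ≃ OPairs n)
      (φ : MulAction.stabilizer G x →* Equiv.Perm (Fin n)),
    Function.Surjective φ ∧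
    ∀ (g : MulAction.stabilizer G x) (v : Γ.neighborSet x),
      ((e.symm (φ g • e v) : Γ.neighborSet x) : V) = g • (v : V)

/-!
Write `K_x` for `G_x^{[1]}` and `E_{xy}` for `G_{xy}^{[1]} = K_x ⊓ K_y`. Two facts about `L` enter:
its point stabilisers are isomorphic to `Sym(n - 2)`, and a normal subgroup of `Sym(n)` containing
a nontrivial permutation with a fixed point contains `Alt(n)`, hence is transitive on ordered
pairs, so that `L` is semiprimitive.

The normaliser of `E_{xy}` contains `G_{xy}` and an element swapping `x` and `y`. If every element
normalising `E_{xy}` also normalises a subgroup `M ≤ E_{xy}`, and `M` is normalised by a normal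
subgroup `R` of `G_x` which is transitive on `Γ(x)`, then `M` is normal in `G` and fixes `x`, so
`M = 1`. By semiprimitivity `R` is transitive as soon as `R ⊓ G_y` is not contained in `K_x`.

If `O_p(K_x) ≠ 1`, the action of `G_{xy}` on `Γ(y)` maps `O_p(K_x)` onto a nontrivial normal
`p`-subgroup of `Sym(n - 2)`, which determines `(n, p)`. The subgroup `R` generated by the
`O_p(K_z)` for `z ∈ Γ(y)` normalises `M = O^p(E_{xy})`, so `M = 1` and `E_{xy}` is a `p`-group.

Otherwise every `K_x` has trivial Fitting subgroup. Let `P_{xy}` be the centraliser of `E_{xy}` in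
`K_x`, which meets `K_y` trivially. If `P_{xy} = 1`, then `K_x` and `E_{xy}` have the same smallest
faithful normal subgroup, which is therefore trivial. If `P_{xy} ≠ 1`, each nontrivial normal
subgroup of `K_x` contained in `P_{xy}` maps onto a subgroup of `Sym(n - 2)` containing
`Alt(n - 2)`, so its centraliser in `K_x` is exactly `E_{xy}`. It follows that `P_{xy}` normalises
`E_{yz}` for every `z ∈ Γ(y)`, and the subgroup `R` generated by the `P_{zy}` for `z ∈ Γ(y)` gives
`E_{xy} = 1`.
-/

section SymmetricGroups

variable {α : Type*}

theorem isSolvable_perm_of_card_le_four [Finite α] (hα : Nat.card α ≤ 4) :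
    Group.IsSolvable (Equiv.Perm α) := by
  have isMulCommutative_commutator : IsMulCommutative (commutator (alternatingGroup (Fin 4))) := by
    rw [← alternatingGroup.kleinFour_eq_commutator (by simp)]
    have := alternatingGroup.kleinFour_isKleinFour (α := Fin 4) (by simp)
    exact ⟨⟨mul_comm_of_exponent_two this.exponent_two⟩⟩
  have isSolvable_commutator : Group.IsSolvable (commutator (alternatingGroup (Fin 4))) :=
    Group.isSolvable_of_comm mul_comm'
  have isSolvable_alternating : Group.IsSolvable (alternatingGroup (Fin 4)) :=
    Group.isSolvable_of_ker_le_range (commutator (alternatingGroup (Fin 4))).subtype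
      Abelianization.of (by simp)
  have isSolvable_perm : Group.IsSolvable (Equiv.Perm (Fin 4)) :=
    Group.isSolvable_of_ker_le_range (alternatingGroup (Fin 4)).subtype Equiv.Perm.sign
      (by rw [Subgroup.range_subtype, alternatingGroup_eq_sign_ker])
  have : Fintype α := Fintype.ofFinite α
  obtain ⟨ι⟩ : Nonempty (α ↪ Fin 4) :=
    Function.Embedding.nonempty_of_card_le (by simpa [Nat.card_eq_fintype_card] using hα)
  exact Group.isSolvable_of_isSolvable_injective (Equiv.Perm.viaEmbeddingHom_injective ι)

theorem perm_eq_bot_of_normal_of_isSolvable [Finite α] (hα : 5 ≤ Nat.card α)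
    (N : Subgroup (Equiv.Perm α)) [N.Normal] [Group.IsSolvable N] : N = ⊥ := by
  classical
  have : Fintype α := Fintype.ofFinite α
  by_contra hN
  have alternating_le : alternatingGroup α ≤ N :=
    Equiv.Perm.alternatingGroup_le_of_normal hα ((Subgroup.nontrivial_iff_ne_bot N).2 hN)
  have : Group.IsSolvable (alternatingGroup α) :=
    Group.isSolvable_of_isSolvable_injective (Subgroup.inclusion_injective alternating_le)
  refine Equiv.Perm.not_isSolvable α ?_ (Group.isSolvable_of_ker_le_range
    (alternatingGroup α).subtype Equiv.Perm.sign
      (by rw [Subgroup.range_subtype, alternatingGroup_eq_sign_ker]))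
  rw [← Nat.cast_card]
  exact_mod_cast hα

theorem perm_prime_dvd_card_of_normal_of_isPGroup {p : ℕ} [Fact p.Prime]
    {N : Subgroup (Equiv.Perm α)} [N.Normal] (hpN : IsPGroup p N) (hN : N ≠ ⊥) :
    p ∣ Nat.card α := by
  by_contra hp
  obtain ⟨a, ha⟩ := hpN.nonempty_fixed_point_of_prime_not_dvd_card α hp
  -- The fixed points of a normal subgroup are permuted by the whole group.
  refine hN ((Subgroup.eq_bot_iff_forall N).2 fun g hg => Equiv.ext fun b => ?_)
  classical
  have hconj := ha ⟨_, Subgroup.Normal.conj_mem inferInstance g hg (Equiv.swap a b)⟩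
  have : Equiv.swap a b (g b) = a := by simpa [Subgroup.smul_def] using hconj
  rw [Equiv.swap_apply_eq_iff, Equiv.swap_apply_left] at this
  exact this

theorem perm_card_of_normal_of_isPGroup [Finite α] {p : ℕ} [Fact p.Prime]
    {N : Subgroup (Equiv.Perm α)} [N.Normal] (hpN : IsPGroup p N) (hN : N ≠ ⊥) :
    (Nat.card α = 2 ∧ p = 2) ∨ (Nat.card α = 3 ∧ p = 3) ∨ (Nat.card α = 4 ∧ p = 2) := by
  have one_lt_card : 1 < Nat.card α := by
    by_contra! h
    have := Finite.card_le_one_iff_subsingleton.1 h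
    exact hN (Subsingleton.elim _ _)
  have card_le_four : Nat.card α ≤ 4 := by
    by_contra! h
    have := hpN.isNilpotent
    exact hN (perm_eq_bot_of_normal_of_isSolvable h N)
  have dvd_card := perm_prime_dvd_card_of_normal_of_isPGroup hpN hN
  have p_le : p ≤ 4 := (Nat.le_of_dvd (by omega) dvd_card).trans card_le_four
  have hp : p.Prime := Fact.out
  interval_cases p <;> first | (norm_num at hp; done) | omega

variable [Fintype α] [DecidableEq α]

theorem exists_mem_alternatingGroup_apply_eq (hα : 4 ≤ Nat.card α) {a b c d : α}
    (hab : a ≠ b) (hcd : c ≠ d) : ∃ σ ∈ alternatingGroup α, σ a = c ∧ σ b = d := by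
  have := alternatingGroup.isMultiplyPretransitive α
  have : IsMultiplyPretransitive (alternatingGroup α) α 2 :=
    isMultiplyPretransitive_of_le (n := Nat.card α - 2) (by omega) (by omega)
  obtain ⟨σ, hσ⟩ := is_two_pretransitive_iff.1 this hab hcd
  exact ⟨σ, σ.2, hσ⟩

theorem centralizer_alternatingGroup_eq_bot (hα : 4 ≤ Nat.card α) :
    Subgroup.centralizer (alternatingGroup α : Set (Equiv.Perm α)) = ⊥ := by
  refine (Subgroup.eq_bot_iff_forall _).2 fun g hg => Equiv.ext fun a => ?_
  change g a = a
  by_contra hga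
  obtain ⟨b, hba, hbg⟩ : ∃ b, b ≠ a ∧ b ≠ g a := by
    obtain ⟨b, hb⟩ : ∃ b, b ∉ ({a, g a} : Finset α) := by
      by_contra! hall
      have := Finset.card_le_card fun b (_ : b ∈ Finset.univ) => hall b
      rw [Finset.card_univ, ← Nat.card_eq_fintype_card] at this
      exact absurd (this.trans Finset.card_le_two) (by omega)
    exact ⟨b, by simpa using hb⟩
  obtain ⟨σ, hσ, hσa, hσg⟩ := exists_mem_alternatingGroup_apply_eq hα (Ne.symm hga) hba.symm
  have commutes : σ (g a) = g (σ a) := congr($(Subgroup.mem_centralizer_iff.1 hg σ hσ) a)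
  rw [hσa, hσg] at commutes
  exact hbg commutes

theorem alternatingGroup_le_of_le_normalizer (hα : 5 ≤ Nat.card α) {B : Subgroup (Equiv.Perm α)}
    (hB : B ≠ ⊥) (hnorm : alternatingGroup α ≤ Subgroup.normalizer (B : Set (Equiv.Perm α))) :
    alternatingGroup α ≤ B := by
  have := alternatingGroup.isSimpleGroup hα
  have : (B.subgroupOf (alternatingGroup α)).Normal :=
    Subgroup.normal_subgroupOf_of_le_normalizer hnorm
  rcases this.eq_bot_or_eq_top with h | h
  · have commutator_eq_bot : ⁅B, alternatingGroup α⁆ = ⊥ := by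
      rw [eq_bot_iff, ← (Subgroup.subgroupOf_eq_bot.1 h).eq_bot]
      refine le_inf ?_ (Subgroup.commutator_le_right _ _)
      rw [Subgroup.commutator_comm]
      exact Subgroup.le_normalizer_iff_commutator_le_right.1 hnorm
    rw [Subgroup.commutator_eq_bot_iff_le_centralizer,
      centralizer_alternatingGroup_eq_bot (by omega), le_bot_iff] at commutator_eq_bot
    exact absurd commutator_eq_bot hB
  · exact Subgroup.subgroupOf_eq_top.1 h

theorem alternatingGroup_le_of_isThreeCycle_mem {R : Subgroup (Equiv.Perm α)} [hR : R.Normal]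
    {σ : Equiv.Perm α} (hσ : σ.IsThreeCycle) (hσR : σ ∈ R) : alternatingGroup α ≤ R := by
  rw [← Equiv.Perm.closure_three_cycles_eq_alternating, Subgroup.closure_le]
  intro τ hτ
  obtain ⟨c, rfl⟩ := isConj_iff.1
    (Equiv.Perm.isConj_iff_cycleType_eq.2 (hσ.cycleType.trans (Eq.symm hτ)))
  exact hR.conj_mem _ hσR c

theorem alternatingGroup_le_of_apply_eq_self {R : Subgroup (Equiv.Perm α)} [hR : R.Normal]
    {ρ : Equiv.Perm α} (hρR : ρ ∈ R) (hρ : ρ ≠ 1) {a : α} (ha : ρ a = a) :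
    alternatingGroup α ≤ R := by
  obtain ⟨c, hc⟩ : ∃ c, ρ c ≠ c := by
    by_contra! h
    exact hρ (Equiv.ext h)
  have hac : a ≠ c := by rintro rfl; exact hc ha
  have ha_ρc : a ≠ ρ c := fun h => hac (ρ.injective (ha.trans h))
  have commutator_eq : ρ * (Equiv.swap a c * ρ⁻¹ * (Equiv.swap a c)⁻¹) =
      Equiv.swap a (ρ c) * Equiv.swap a c := by
    have conj_swap := Equiv.swap_apply_apply ρ a c
    rw [ha] at conj_swap
    rw [conj_swap, Equiv.swap_inv]
    group
  refine alternatingGroup_le_of_isThreeCycle_mem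
    (Equiv.Perm.isThreeCycle_swap_mul_swap_same ha_ρc hac hc) ?_
  rw [← commutator_eq]
  exact mul_mem hρR (hR.conj_mem _ (inv_mem hρR) _)

end SymmetricGroups

section RelativeSubgroups

open Subgroup

variable {G : Type*} [Group G]

theorem mem_normalizer_iff_conj_smul_eq {H : Subgroup G} {g : G} :
    g ∈ normalizer (H : Set G) ↔ MulAut.conj g • H = H :=
  mem_normalizer_iff_map_conj_eq

theorem smul_eq_of_forall_smul_le {F : Subgroup G → Subgroup G}
    (hF : ∀ (φ : MulAut G) (H : Subgroup G), φ • F H ≤ F (φ • H)) (φ : MulAut G)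
    (H : Subgroup G) : φ • F H = F (φ • H) := by
  refine le_antisymm (hF φ H) ?_
  rw [← pointwise_smul_le_pointwise_smul_iff (a := φ⁻¹), inv_smul_smul]
  simpa only [inv_smul_smul] using hF φ⁻¹ (φ • H)

theorem normalizer_le_normalizer_of_equivariant {F : Subgroup G → Subgroup G}
    (hF : ∀ (φ : MulAut G) (H : Subgroup G), φ • F H = F (φ • H)) (H : Subgroup G) :
    normalizer (H : Set G) ≤ normalizer (F H : Set G) := by
  intro g hg
  rw [mem_normalizer_iff_conj_smul_eq] at hg ⊢
  rw [hF, hg]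

theorem smul_centralizer (φ : MulAut G) (H : Subgroup G) :
    φ • centralizer (H : Set G) = centralizer ((φ • H : Subgroup G) : Set G) := by
  refine smul_eq_of_forall_smul_le (F := fun H => centralizer (H : Set G)) (fun φ H => ?_) φ H
  exact map_centralizer_le_centralizer_image _ _

/-- `M` is a normal subgroup of the subgroup `H` of the ambient group. -/
structure NormalIn (M H : Subgroup G) : Prop where
  le : M ≤ H
  le_normalizer : H ≤ normalizer (M : Set G)

namespace NormalIn

variable {H K L M : Subgroup G}

theorem refl (H : Subgroup G) : NormalIn H H := ⟨le_rfl, Subgroup.le_normalizer⟩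

theorem bot (H : Subgroup G) : NormalIn ⊥ H :=
  ⟨bot_le, le_normalizer_of_normal⟩

theorem smul (h : NormalIn M H) (φ : MulAut G) : NormalIn (φ • M) (φ • H) := by
  refine ⟨pointwise_smul_le_pointwise_smul_iff.2 h.le, ?_⟩
  exact (pointwise_smul_le_pointwise_smul_iff.2 h.le_normalizer).trans
    (le_normalizer_map φ.toMonoidHom)

theorem inf (hM : NormalIn M H) (hL : NormalIn L H) : NormalIn (M ⊓ L) H :=
  ⟨inf_le_left.trans hM.le, (le_inf hM.le_normalizer hL.le_normalizer).trans
    inf_normalizer_le_normalizer_inf⟩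

theorem sup (hM : NormalIn M H) (hL : NormalIn L H) : NormalIn (M ⊔ L) H :=
  ⟨sup_le hM.le hL.le, (le_inf hM.le_normalizer hL.le_normalizer).trans
    (normalizer_inf_normalizer_le_normalizer_sup M L)⟩

theorem of_le (hM : NormalIn M H) (hML : M ≤ L) (hLH : L ≤ H) : NormalIn M L :=
  ⟨hML, hLH.trans hM.le_normalizer⟩

theorem of_equivariant {F : Subgroup G → Subgroup G} (hM : NormalIn M H)
    (hle : F M ≤ M) (hF : ∀ (φ : MulAut G) (H : Subgroup G), φ • F H = F (φ • H)) :
    NormalIn (F M) H :=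
  ⟨hle.trans hM.le, hM.le_normalizer.trans (normalizer_le_normalizer_of_equivariant hF M)⟩

theorem inf_centralizer (hM : NormalIn M H) : NormalIn (H ⊓ centralizer (M : Set G)) H :=
  ⟨inf_le_left, (le_inf Subgroup.le_normalizer (hM.le_normalizer.trans
    (normalizer_le_normalizer_of_equivariant smul_centralizer M))).trans
    inf_normalizer_le_normalizer_inf⟩

theorem le_centralizer_of_inf_eq_bot (hM : NormalIn M H) (hL : NormalIn L H) (h : M ⊓ L = ⊥) :
    M ≤ centralizer (L : Set G) := by
  rw [← commutator_eq_bot_iff_le_centralizer, eq_bot_iff, ← h]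
  exact le_inf (le_normalizer_iff_commutator_le_left.1 (hL.le.trans hM.le_normalizer))
    (le_normalizer_iff_commutator_le_right.1 (hM.le.trans hL.le_normalizer))

end NormalIn

section PCore

variable {p : ℕ} {H L M : Subgroup G}

/-- The `p`-core `O_p(H)` of a subgroup `H`: the largest normal `p`-subgroup of `H`. -/
def pCore (p : ℕ) (H : Subgroup G) : Subgroup G := sSup {M | NormalIn M H ∧ IsPGroup p M}

theorem le_pCore (hM : NormalIn M H) (hp : IsPGroup p M) : M ≤ pCore p H :=
  le_sSup ⟨hM, hp⟩

theorem pCore_normalIn (p : ℕ) (H : Subgroup G) : NormalIn (pCore p H) H := by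
  refine ⟨sSup_le fun M hM => hM.1.le, ?_⟩
  rw [pCore, sSup_eq_iSup']
  exact (le_iInf fun M : {M | NormalIn M H ∧ IsPGroup p M} => M.2.1.le_normalizer).trans
    (iInf_normalizer_le_normalizer_iSup _)

theorem isPGroup_pCore (p : ℕ) (H : Subgroup G) : IsPGroup p (pCore p H) := by
  have nonempty : {M : Subgroup G | NormalIn M H ∧ IsPGroup p M}.Nonempty :=
    ⟨⊥, NormalIn.bot H, IsPGroup.of_bot⟩
  have directed : DirectedOn (· ≤ ·) {M : Subgroup G | NormalIn M H ∧ IsPGroup p M} := by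
    rintro M ⟨hM, hpM⟩ L ⟨hL, hpL⟩
    exact ⟨M ⊔ L, ⟨hM.sup hL, hpM.to_sup_of_normal_right' hpL (hM.le.trans hL.le_normalizer)⟩,
      le_sup_left, le_sup_right⟩
  rintro ⟨g, hg⟩
  obtain ⟨M, ⟨-, hpM⟩, hgM⟩ := (mem_sSup_of_directedOn nonempty directed).1 hg
  obtain ⟨k, hk⟩ := hpM ⟨g, hgM⟩
  exact ⟨k, Subtype.ext (by simpa [Subtype.ext_iff] using hk)⟩

theorem smul_pCore (p : ℕ) (φ : MulAut G) (H : Subgroup G) : φ • pCore p H = pCore p (φ • H) :=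
  smul_eq_of_forall_smul_le (fun φ H => le_pCore ((pCore_normalIn p H).smul φ)
    ((isPGroup_pCore p H).map _)) φ H

theorem NormalIn.pCore_le_pCore (hL : NormalIn L H) : pCore p L ≤ pCore p H :=
  le_pCore (hL.of_equivariant (pCore_normalIn p L).le (smul_pCore p)) (isPGroup_pCore p L)

theorem NormalIn.pCore_eq (hL : NormalIn L H) (h : pCore p H ≤ L) : pCore p H = pCore p L :=
  le_antisymm (le_pCore ((pCore_normalIn p H).of_le h hL.le) (isPGroup_pCore p H))
    hL.pCore_le_pCore

end PCore

section PResidual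

variable {p : ℕ}

/-- The `p`-residual `O^p(H)` of a finite subgroup `H`, as the subgroup generated by the
elements of `H` of order prime to `p`. -/
def pResidual (p : ℕ) (H : Subgroup G) : Subgroup G := closure {g | g ∈ H ∧ p.Coprime (orderOf g)}

theorem pResidual_le (p : ℕ) (H : Subgroup G) : pResidual p H ≤ H :=
  (closure_le H).2 fun _ hg => hg.1

theorem smul_pResidual (p : ℕ) (φ : MulAut G) (H : Subgroup G) :
    φ • pResidual p H = pResidual p (φ • H) := by
  refine smul_eq_of_forall_smul_le (fun φ H => ?_) φ H
  rw [pResidual, smul_closure]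
  refine closure_mono ?_
  rintro _ ⟨g, ⟨hgH, hg⟩, rfl⟩
  exact ⟨smul_mem_pointwise_smul _ _ _ hgH, by simpa using hg⟩

theorem isPGroup_of_pResidual_eq_bot [Finite G] [Fact p.Prime] {H : Subgroup G}
    (h : pResidual p H = ⊥) : IsPGroup p H := by
  rw [IsPGroup.iff_orderOf]
  rintro ⟨g, hg⟩
  obtain ⟨k, m, hm, horder⟩ :=
    Nat.exists_eq_pow_mul_and_not_dvd (orderOf_pos g).ne' p (Nat.Prime.ne_one Fact.out)
  have orderOf_pow : orderOf (g ^ p ^ k) = m := by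
    rw [orderOf_pow_of_dvd (pow_ne_zero _ (Nat.Prime.ne_zero Fact.out)) ⟨m, horder⟩, horder,
      Nat.mul_div_cancel_left _ (pow_pos (Nat.Prime.pos Fact.out) _)]
  have mem : g ^ p ^ k ∈ pResidual p H :=
    subset_closure ⟨pow_mem hg _, orderOf_pow ▸ (Nat.Prime.coprime_iff_not_dvd Fact.out).2 hm⟩
  rw [h, mem_bot] at mem
  refine ⟨k, ?_⟩
  rw [orderOf_mk, horder, ← orderOf_pow, mem, orderOf_one, mul_one]

theorem mem_of_mem_sup_of_coprime_orderOf {P X : Subgroup G} (hP : IsPGroup p P)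
    (hPX : P ≤ normalizer (X : Set G)) {g : G} (hg : g ∈ P ⊔ X) (hpg : p.Coprime (orderOf g)) :
    g ∈ X := by
  have sup_le : P ⊔ X ≤ normalizer (X : Set G) := sup_le hPX le_normalizer
  let π := QuotientGroup.mk' (X.subgroupOf (normalizer (X : Set G)))
  let P' := P.subgroupOf (normalizer (X : Set G))
  have mem_map : π ⟨g, sup_le hg⟩ ∈ P'.map π := by
    have := mem_map_of_mem π (mem_subgroupOf.2 hg : ⟨g, sup_le hg⟩ ∈ (P ⊔ X).subgroupOf _)
    rwa [subgroupOf_sup hPX le_normalizer, Subgroup.map_sup, QuotientGroup.map_mk'_self,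
      sup_bot_eq] at this
  have order_coprime : (orderOf (π ⟨g, sup_le hg⟩)).Coprime (orderOf g) := by
    rw [← Subgroup.orderOf_mk _ mem_map]
    exact (hP.comap_subtype.map π).orderOf_coprime hpg ⟨_, mem_map⟩
  have order_dvd : orderOf (π ⟨g, sup_le hg⟩) ∣ orderOf g := by
    simpa using orderOf_map_dvd π ⟨g, sup_le hg⟩
  have π_eq_one := orderOf_eq_one_iff.1 (Nat.Coprime.eq_one_of_dvd order_coprime order_dvd)
  simpa [π, mem_subgroupOf] using π_eq_one

open scoped commutatorElement in
theorem le_normalizer_pResidual {A Q E : Subgroup G} (hA : IsPGroup p A)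
    (hAE : A ≤ normalizer (E : Set G)) (hQ : ⁅Q, E⁆ ≤ A) :
    Q ≤ normalizer (pResidual p E : Set G) := by
  refine le_normalizer_closure_iff.2 fun q hq a ⟨ha, hpa⟩ => ?_
  have hAX := hAE.trans (normalizer_le_normalizer_of_equivariant (smul_pResidual p) E)
  refine mem_of_mem_sup_of_coprime_orderOf hA hAX ?_ ?_
  · have : q * a * q⁻¹ = ⁅q, a⁆ * a := by simp [commutatorElement_def]
    rw [this]
    exact mul_mem (mem_sup_left (hQ (commutator_mem_commutator hq ha)))
      (mem_sup_right (subset_closure ⟨ha, hpa⟩))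
  · simpa using (MulEquiv.orderOf_eq (MulAut.conj q) a).symm ▸ hpa

end PResidual

section FittingFree

variable {H K L M : Subgroup G}

/-- `H` has trivial Fitting subgroup, expressed by the triviality of every `p`-core of `H`. -/
def IsFittingFree (H : Subgroup G) : Prop := ∀ p : ℕ, p.Prime → pCore p H = ⊥

namespace IsFittingFree

theorem smul (hH : IsFittingFree H) (φ : MulAut G) : IsFittingFree (φ • H) := fun p hp => by
  rw [← smul_pCore, hH p hp, smul_bot]

theorem of_normalIn (hH : IsFittingFree H) (hM : NormalIn M H) : IsFittingFree M := fun p hp => by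
  rw [eq_bot_iff, ← hH p hp]
  exact hM.pCore_le_pCore

theorem comap {T : Type*} [Group T] {f : T →* G} (hf : Function.Injective f) (hH : IsFittingFree H)
    (hHf : H ≤ f.range) : IsFittingFree (H.comap f) := by
  intro p hp
  rw [← map_eq_bot_iff_of_injective _ hf, eq_bot_iff, ← hH p hp]
  have hcore := pCore_normalIn p (H.comap f)
  have normalIn_map : NormalIn ((pCore p (H.comap f)).map f) H := by
    refine ⟨map_le_iff_le_comap.2 hcore.le, ?_⟩
    exact (map_comap_eq_self hHf).ge.trans
      ((map_mono hcore.le_normalizer).trans (le_normalizer_map f))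
  exact le_pCore normalIn_map ((isPGroup_pCore p _).map f)

variable [Finite G]

theorem eq_bot_of_isMulCommutative (hH : IsFittingFree H) [IsMulCommutative H] : H = ⊥ := by
  by_contra hne
  have : Nontrivial H := (nontrivial_iff_ne_bot H).2 hne
  obtain ⟨p, hp, hdvd⟩ := Nat.exists_prime_and_dvd (Finite.one_lt_card (α := H)).ne'
  have : Fact p.Prime := ⟨hp⟩
  obtain ⟨a, ha⟩ := exists_prime_orderOf_dvd_card' p hdvd
  have order_a : orderOf (a : G) = p := by rw [orderOf_coe, ha]
  have zpowers_normalIn : NormalIn (zpowers (a : G)) H := by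
    have zpowers_le : zpowers (a : G) ≤ H := zpowers_le.2 a.2
    exact ⟨zpowers_le, (le_centralizer H).trans
      ((centralizer_le zpowers_le).trans (centralizer_le_normalizer _))⟩
  have zpowers_eq_bot : zpowers (a : G) ≤ ⊥ :=
    (le_pCore zpowers_normalIn (IsPGroup.of_card (n := 1) (by simp [order_a]))).trans (hH p hp).le
  have : (a : G) = 1 := zpowers_eq_bot (mem_zpowers _)
  rw [this, orderOf_one] at order_a
  exact hp.one_lt.ne order_a

theorem eq_bot_of_isSolvable (hH : IsFittingFree H) (hsolv : Group.IsSolvable H) : H = ⊥ := by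
  induction H using WellFoundedLT.induction with
  | ind H ih =>
    by_contra hne
    have : Nontrivial H := (nontrivial_iff_ne_bot H).2 hne
    have commutator_lt : ⁅H, H⁆ < H := by
      rw [← map_subtype_commutator]
      refine (map_lt_map_iff_of_injective H.subtype_injective).2
        (Group.IsSolvable.commutator_lt_top_of_nontrivial H) |>.trans_eq ?_
      rw [← MonoidHom.range_eq_map, range_subtype]
    have commutator_normalIn : NormalIn ⁅H, H⁆ H :=
      ⟨commutator_lt.le, normalizer_commutator_ge_left H H⟩
    have commutator_isSolvable : Group.IsSolvable (⁅H, H⁆ : Subgroup G) :=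
      Group.isSolvable_of_isSolvable_injective (inclusion_injective commutator_lt.le)
    have commutator_eq_bot :=
      ih _ commutator_lt (hH.of_normalIn commutator_normalIn) commutator_isSolvable
    have : IsMulCommutative H := le_centralizer_iff_isMulCommutative.1
      (commutator_eq_bot_iff_le_centralizer.1 commutator_eq_bot)
    exact hne hH.eq_bot_of_isMulCommutative

theorem inf_centralizer_eq_bot (hH : IsFittingFree H) (hM : NormalIn M H) :
    M ⊓ centralizer (M : Set G) = ⊥ := by
  have : IsMulCommutative (M ⊓ centralizer (M : Set G) : Subgroup G) :=
    le_centralizer_iff_isMulCommutative.1 (inf_le_right.trans (centralizer_le inf_le_left))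
  have isFittingFree := (hH.of_normalIn hM).of_normalIn (NormalIn.refl M).inf_centralizer
  exact isFittingFree.eq_bot_of_isMulCommutative

end IsFittingFree

/-- A normal subgroup `L` of `H` on which `H` acts faithfully by conjugation. -/
structure FaithfulNormalIn (L H : Subgroup G) : Prop extends NormalIn L H where
  inf_centralizer : H ⊓ centralizer (L : Set G) = ⊥

/-- The intersection of the normal subgroups of `H` on which `H` acts faithfully by conjugation.
For a finite Fitting-free `H` it is the socle of `H`. -/
def faithfulCore (H : Subgroup G) : Subgroup G := sInf {L | FaithfulNormalIn L H}

theorem FaithfulNormalIn.smul (h : FaithfulNormalIn L H) (φ : MulAut G) :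
    FaithfulNormalIn (φ • L) (φ • H) :=
  ⟨h.toNormalIn.smul φ, by rw [← smul_centralizer, ← smul_inf, h.inf_centralizer, smul_bot]⟩

theorem smul_faithfulCore (φ : MulAut G) (H : Subgroup G) :
    φ • faithfulCore H = faithfulCore (φ • H) := by
  refine smul_eq_of_forall_smul_le (fun φ H => le_sInf fun L hL => ?_) φ H
  rw [pointwise_smul_subset_iff]
  exact sInf_le (by simpa using hL.smul φ⁻¹)

namespace IsFittingFree

variable [Finite G]

theorem faithfulNormalIn_inf (hH : IsFittingFree H) (hL : FaithfulNormalIn L H)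
    (hM : FaithfulNormalIn M H) : FaithfulNormalIn (L ⊓ M) H := by
  have hLM := hL.toNormalIn.inf hM.toNormalIn
  refine ⟨hLM, ?_⟩
  set C := H ⊓ centralizer ((L ⊓ M : Subgroup G) : Set G)
  have hC : NormalIn C H := hLM.inf_centralizer
  have inf_inf_eq_bot : C ⊓ L ⊓ M = ⊥ := by
    rw [eq_bot_iff, ← hH.inf_centralizer_eq_bot hLM, inf_assoc, inf_comm]
    exact inf_le_inf_left _ inf_le_right
  have inf_eq_bot : C ⊓ L = ⊥ := by
    rw [eq_bot_iff, ← hM.inf_centralizer]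
    exact le_inf (inf_le_left.trans hC.le)
      ((hC.inf hL.toNormalIn).le_centralizer_of_inf_eq_bot hM.toNormalIn inf_inf_eq_bot)
  rw [eq_bot_iff, ← hL.inf_centralizer]
  exact le_inf hC.le (hC.le_centralizer_of_inf_eq_bot hL.toNormalIn inf_eq_bot)

theorem faithfulNormalIn_faithfulCore (hH : IsFittingFree H) :
    FaithfulNormalIn (faithfulCore H) H := by
  have infClosed : InfClosed {L | FaithfulNormalIn L H} :=
    fun _ hL _ hM => hH.faithfulNormalIn_inf hL hM
  exact infClosed.sInf_mem_of_nonempty (Set.toFinite _)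
    ⟨H, NormalIn.refl H, hH.inf_centralizer_eq_bot (NormalIn.refl H)⟩ subset_rfl

theorem faithfulCore_eq (hH : IsFittingFree H) (hL : FaithfulNormalIn L H) :
    faithfulCore H = faithfulCore L := by
  have hcoreH := hH.faithfulNormalIn_faithfulCore
  have hcoreL := (hH.of_normalIn hL.toNormalIn).faithfulNormalIn_faithfulCore
  have core_le : faithfulCore H ≤ L := sInf_le hL
  refine le_antisymm (sInf_le ?_) (sInf_le ⟨hcoreH.toNormalIn.of_le core_le hL.le, ?_⟩)
  · have hcoreLH : NormalIn (faithfulCore L) H :=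
      hL.toNormalIn.of_equivariant hcoreL.le smul_faithfulCore
    refine ⟨hcoreLH, ?_⟩
    have hC := hcoreLH.inf_centralizer
    rw [eq_bot_iff, ← hL.inf_centralizer]
    refine le_inf hC.le (hC.le_centralizer_of_inf_eq_bot hL.toNormalIn ?_)
    rw [eq_bot_iff, ← hcoreL.inf_centralizer, inf_comm]
    exact inf_le_inf_left _ inf_le_right
  · rw [eq_bot_iff, ← hcoreH.inf_centralizer]
    exact inf_le_inf_right _ hL.le

end IsFittingFree

end FittingFree

section SymmetricQuotient

theorem isSolvable_of_isSolvable_map {T : Type*} [Group T] (f : G →* T) {M : Subgroup G}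
    (hM : M ⊓ f.ker = ⊥) [Group.IsSolvable (M.map f)] : Group.IsSolvable M := by
  refine Group.isSolvable_of_isSolvable_injective (f := f.subgroupMap M) ?_
  rw [← MonoidHom.ker_eq_bot_iff, ker_subgroupMap, subgroupOf_eq_bot, disjoint_comm,
    disjoint_iff, hM]

theorem centralizer_subgroupOf {H T : Subgroup G} (hHT : H ≤ T) :
    centralizer (H.subgroupOf T : Set T) = (centralizer (H : Set G)).subgroupOf T := by
  ext g
  rw [mem_subgroupOf, mem_centralizer_iff, mem_centralizer_iff]
  exact ⟨fun hg k hk => congr_arg Subtype.val (hg ⟨k, hHT hk⟩ hk),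
    fun hg k hk => Subtype.ext (hg k hk)⟩

variable [Finite G] {α : Type*} {f : G →* Equiv.Perm α} {K B : Subgroup G}

theorem IsFittingFree.inf_centralizer_inf_ker_eq_bot {T : Type*} [Group T] {f : G →* T} [K.Normal]
    (hK : IsFittingFree K) : K ⊓ centralizer ((K ⊓ f.ker : Subgroup G) : Set G) ⊓ f.ker = ⊥ := by
  have hKf : NormalIn (K ⊓ f.ker) K := ⟨inf_le_left, le_normalizer_of_normal⟩
  rw [← hK.inf_centralizer_eq_bot hKf, inf_right_comm]

theorem IsFittingFree.alternatingGroup_le_map [Fintype α] [DecidableEq α]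
    (hf : Function.Surjective f) [K.Normal] (hK : IsFittingFree K)
    (hB : B ≤ K ⊓ centralizer ((K ⊓ f.ker : Subgroup G) : Set G)) (hKB : NormalIn B K)
    (hne : B ≠ ⊥) : 5 ≤ Nat.card α ∧ alternatingGroup α ≤ B.map f := by
  set P := K ⊓ centralizer ((K ⊓ f.ker : Subgroup G) : Set G)
  have P_inf_ker : P ⊓ f.ker = ⊥ := hK.inf_centralizer_inf_ker_eq_bot
  have P_normalIn : NormalIn P K :=
    NormalIn.inf_centralizer ⟨inf_le_left, le_normalizer_of_normal⟩
  have P_normal : P.Normal := inferInstance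
  have map_P_normal : (P.map f).Normal := P_normal.map f hf
  have map_P_not_isSolvable : ¬ Group.IsSolvable (P.map f) := by
    intro
    have := isSolvable_of_isSolvable_map f P_inf_ker
    exact hne (le_bot_iff.1 (hB.trans ((hK.of_normalIn P_normalIn).eq_bot_of_isSolvable this).le))
  have five_le_card : 5 ≤ Nat.card α := by
    by_contra! h
    have := isSolvable_perm_of_card_le_four (Nat.lt_succ_iff.1 h)
    exact map_P_not_isSolvable inferInstance
  have alternating_le_map_P : alternatingGroup α ≤ P.map f := by
    refine Equiv.Perm.alternatingGroup_le_of_normal five_le_card ((nontrivial_iff_ne_bot _).2 ?_)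
    intro h
    rw [h] at map_P_not_isSolvable
    exact map_P_not_isSolvable inferInstance
  have map_B_ne_bot : B.map f ≠ ⊥ := by
    rw [Ne, Subgroup.map_eq_bot_iff]
    exact fun h => hne (le_bot_iff.1 ((le_inf hB h).trans P_inf_ker.le))
  refine ⟨five_le_card, alternatingGroup_le_of_le_normalizer five_le_card map_B_ne_bot ?_⟩
  exact alternating_le_map_P.trans ((map_mono (P_normalIn.le.trans hKB.le_normalizer)).trans
    (le_normalizer_map f))

theorem IsFittingFree.inf_centralizer_eq_inf_ker [Finite α] (hf : Function.Surjective f) [K.Normal]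
    (hK : IsFittingFree K) (hB : B ≤ K ⊓ centralizer ((K ⊓ f.ker : Subgroup G) : Set G))
    (hKB : NormalIn B K) (hne : B ≠ ⊥) : K ⊓ centralizer (B : Set G) = K ⊓ f.ker := by
  classical
  have : Fintype α := Fintype.ofFinite α
  obtain ⟨five_le_card, alternating_le⟩ := hK.alternatingGroup_le_map hf hB hKB hne
  refine le_antisymm (le_inf inf_le_left ?_)
    (le_inf inf_le_left (le_centralizer_iff.1 (hB.trans inf_le_right)))
  rw [← Subgroup.map_eq_bot_iff, eq_bot_iff,
    ← centralizer_alternatingGroup_eq_bot (α := α) (by omega)]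
  calc (K ⊓ centralizer (B : Set G)).map f ≤ (centralizer (B : Set G)).map f :=
        map_mono inf_le_right
    _ ≤ centralizer (B.map f : Set (Equiv.Perm α)) := map_centralizer_le_centralizer_image _ _
    _ ≤ centralizer (alternatingGroup α : Set (Equiv.Perm α)) := centralizer_le alternating_le

theorem IsFittingFree.inf_centralizer_eq_inf_of_ker_eq [Finite α] {T L : Subgroup G}
    {ψ : T →* Equiv.Perm α} (hψ : Function.Surjective ψ) (ker_eq : ψ.ker = L.subgroupOf T)
    (hKT : NormalIn K T) (hK : IsFittingFree K)
    (hB : B ≤ K ⊓ centralizer ((K ⊓ L : Subgroup G) : Set G)) (hBK : NormalIn B K) (hne : B ≠ ⊥) :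
    K ⊓ centralizer (B : Set G) = K ⊓ L := by
  have hBT : B ≤ T := hBK.le.trans hKT.le
  have hKLT : K ⊓ L ≤ T := inf_le_left.trans hKT.le
  have K_normal : (K.subgroupOf T).Normal := normal_subgroupOf_of_le_normalizer hKT.le_normalizer
  have inf_ker : K.subgroupOf T ⊓ ψ.ker = (K ⊓ L).subgroupOf T := by rw [ker_eq]; rfl
  have hK' : IsFittingFree (K.subgroupOf T) :=
    hK.comap T.subtype_injective (hKT.le.trans_eq T.range_subtype.symm)
  have hB' : B.subgroupOf T ≤
      K.subgroupOf T ⊓ centralizer ((K.subgroupOf T ⊓ ψ.ker : Subgroup T) : Set T) := by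
    rw [inf_ker, centralizer_subgroupOf hKLT]
    exact comap_mono hB
  have hne' : B.subgroupOf T ≠ ⊥ := fun h =>
    hne (by rwa [subgroupOf_eq_bot, disjoint_iff, inf_eq_left.2 hBT] at h)
  have eq := hK'.inf_centralizer_eq_inf_ker hψ hB'
    ⟨comap_mono hBK.le, (comap_mono hBK.le_normalizer).trans (le_normalizer_comap _)⟩ hne'
  rw [inf_ker, centralizer_subgroupOf hBT] at eq
  change (K ⊓ centralizer (B : Set G)).subgroupOf T = _ at eq
  rwa [subgroupOf_inj, inf_eq_left.2 (inf_le_left.trans hKT.le), inf_eq_left.2 hKLT] at eq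

end SymmetricQuotient

end RelativeSubgroups

section LocalAction

open Subgroup

variable {G V : Type*} [Group G] [MulAction G V]

/-- The group `G_x^{[1]}` of the elements of `G` fixing `x` and every neighbour of `x`. -/
def localKernel (G : Type*) {V : Type*} [Group G] [MulAction G V] (Γ : SimpleGraph V) (x : V) :
    Subgroup G :=
  fixingSubgroup G (insert x (Γ.neighborSet x))

/-- The group `G_{xy}^{[1]}` of the elements of `G` fixing every vertex at distance at most one
from `x` or from `y`. -/
def edgeKernel (G : Type*) {V : Type*} [Group G] [MulAction G V] (Γ : SimpleGraph V) (x y : V) :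
    Subgroup G :=
  localKernel G Γ x ⊓ localKernel G Γ y

/-- `G` acts on the connected graph `Γ` by automorphisms, transitively on the vertices, and each
vertex stabiliser is transitive on the neighbours of its vertex. -/
structure IsArcTransitive (G : Type*) {V : Type*} [Group G] [MulAction G V] (Γ : SimpleGraph V) :
    Prop where
  connected : Γ.Connected
  smul_adj_smul : ∀ (g : G) ⦃u v : V⦄, Γ.Adj u v → Γ.Adj (g • u) (g • v)
  isPretransitive : IsPretransitive G V
  exists_smul_eq : ∀ ⦃x y z : V⦄, Γ.Adj x y → Γ.Adj x z → ∃ g ∈ stabilizer G x, g • y = z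

/-- The permutation groups induced by the vertex stabilisers on the neighbourhoods are
semiprimitive: a normal subgroup of `G_x` that does not act semiregularly on `Γ(x)` is transitive
on `Γ(x)`. -/
structure IsLocallySemiprimitive (G : Type*) {V : Type*} [Group G] [MulAction G V]
    (Γ : SimpleGraph V) : Prop extends IsArcTransitive G Γ where
  exists_mem_smul_eq : ∀ ⦃x y : V⦄ ⦃R : Subgroup G⦄, Γ.Adj x y → NormalIn R (stabilizer G x) →
    ¬ R ⊓ stabilizer G y ≤ localKernel G Γ x →
    ∀ ⦃z w : V⦄, Γ.Adj x z → Γ.Adj x w → ∃ g ∈ R, g • z = w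

/-- In the permutation group induced by `G_x` on `Γ(x)`, every point stabiliser is isomorphic to
`Sym(α)`. -/
def HasSymmetricArcQuotients (G : Type*) {V : Type*} [Group G] [MulAction G V]
    (Γ : SimpleGraph V) (α : Type*) : Prop :=
  ∀ ⦃x y : V⦄, Γ.Adj x y →
    ∃ ψ : (stabilizer G x ⊓ stabilizer G y : Subgroup G) →* Equiv.Perm α,
      Function.Surjective ψ ∧ ψ.ker = (localKernel G Γ x).subgroupOf _

variable {Γ : SimpleGraph V} {x y z : V}

theorem mem_localKernel {g : G} :
    g ∈ localKernel G Γ x ↔ g • x = x ∧ ∀ y, Γ.Adj x y → g • y = y := by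
  simp only [localKernel, mem_fixingSubgroup_iff, Set.forall_mem_insert,
    SimpleGraph.mem_neighborSet]

theorem localKernel_le_stabilizer : localKernel G Γ x ≤ stabilizer G x :=
  fun _ hg => (mem_localKernel.1 hg).1

theorem localKernel_le_stabilizer_of_adj (hxy : Γ.Adj x y) : localKernel G Γ x ≤ stabilizer G y :=
  fun _ hg => (mem_localKernel.1 hg).2 y hxy

theorem edgeKernel_comm (x y : V) : edgeKernel G Γ x y = edgeKernel G Γ y x := inf_comm _ _

theorem eq_bot_of_normal_of_le_stabilizer [FaithfulSMul G V] [IsPretransitive G V]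
    {M : Subgroup G} [M.Normal] (hM : M ≤ stabilizer G x) : M = ⊥ := by
  refine (eq_bot_iff_forall M).2 fun g hg => ?_
  refine FaithfulSMul.eq_of_smul_eq_smul (α := V) fun v => ?_
  obtain ⟨k, rfl⟩ := MulAction.exists_smul_eq G x v
  have := hM (Normal.conj_mem' inferInstance g hg k)
  rw [mem_stabilizer_iff, mul_smul, mul_smul, inv_smul_eq_iff] at this
  exact this.trans (one_smul G _).symm

theorem le_normalizer_of_forall_smul_le {H M : Subgroup G}
    (h : ∀ g ∈ H, MulAut.conj g • M ≤ M) : H ≤ normalizer (M : Set G) := by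
  refine fun g hg => mem_normalizer_iff_conj_smul_eq.2 (le_antisymm (h g hg) ?_)
  rw [subset_pointwise_smul_iff, ← map_inv]
  exact h _ (inv_mem hg)

namespace IsArcTransitive

variable (h : IsArcTransitive G Γ)
include h

theorem smul_neighborSet (g : G) (x : V) : g • Γ.neighborSet x = Γ.neighborSet (g • x) := by
  ext v
  rw [Set.mem_smul_set_iff_inv_smul_mem, SimpleGraph.mem_neighborSet, SimpleGraph.mem_neighborSet]
  exact ⟨fun hv => by simpa using h.smul_adj_smul g hv,
    fun hv => by simpa using h.smul_adj_smul g⁻¹ hv⟩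

theorem smul_localKernel (g : G) (x : V) :
    MulAut.conj g • localKernel G Γ x = localKernel G Γ (g • x) := by
  rw [localKernel, localKernel, ← h.smul_neighborSet, ← Set.smul_set_insert,
    SubMulAction.fixingSubgroup_smul_eq_fixingSubgroup_map_conj]
  rfl

theorem smul_edgeKernel (g : G) (x y : V) :
    MulAut.conj g • edgeKernel G Γ x y = edgeKernel G Γ (g • x) (g • y) := by
  rw [edgeKernel, smul_inf, h.smul_localKernel, h.smul_localKernel, edgeKernel]

theorem localKernel_normalIn (x : V) : NormalIn (localKernel G Γ x) (stabilizer G x) := by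
  refine ⟨localKernel_le_stabilizer, fun g hg => mem_normalizer_iff_conj_smul_eq.2 ?_⟩
  rw [h.smul_localKernel, mem_stabilizer_iff.1 hg]

theorem edgeKernel_normalIn (x y : V) :
    NormalIn (edgeKernel G Γ x y) (stabilizer G x ⊓ stabilizer G y) :=
  ⟨inf_le_inf localKernel_le_stabilizer localKernel_le_stabilizer,
    (inf_le_inf (h.localKernel_normalIn x).le_normalizer
      (h.localKernel_normalIn y).le_normalizer).trans inf_normalizer_le_normalizer_inf⟩

theorem edgeKernel_normalIn_localKernel (hxy : Γ.Adj x y) :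
    NormalIn (edgeKernel G Γ x y) (localKernel G Γ x) :=
  (h.edgeKernel_normalIn x y).of_le inf_le_left
    (le_inf localKernel_le_stabilizer (localKernel_le_stabilizer_of_adj hxy))

theorem exists_flip (hxy : Γ.Adj x y) : ∃ t : G, t • x = y ∧ t • y = x := by
  obtain ⟨g, rfl⟩ := h.isPretransitive.exists_smul_eq x y
  obtain ⟨k, hk, hkx⟩ := h.exists_smul_eq (h.smul_adj_smul g hxy) hxy.symm
  exact ⟨k * g, by rw [mul_smul, mem_stabilizer_iff.1 hk], by rw [mul_smul, hkx]⟩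

theorem eq_top_of_stabilizer_le {N : Subgroup G} (hN : stabilizer G x ≤ N) {t : G} (ht : t ∈ N)
    (hxt : Γ.Adj x (t • x)) : N = ⊤ := by
  have exists_mem : ∀ v, ∃ g ∈ N, g • x = v := fun v => by
    have reachable := h.connected.preconnected x v
    rw [SimpleGraph.reachable_iff_reflTransGen] at reachable
    induction reachable with
    | refl => exact ⟨1, one_mem N, one_smul G x⟩
    | tail _ hadj ih =>
      obtain ⟨g, hg, rfl⟩ := ih
      have hadj' := h.smul_adj_smul g⁻¹ hadj
      rw [inv_smul_smul] at hadj'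
      obtain ⟨k, hk, hkt⟩ := h.exists_smul_eq hxt hadj'
      refine ⟨g * (k * t), mul_mem hg (mul_mem (hN hk) ht), ?_⟩
      rw [mul_smul, mul_smul, hkt, smul_inv_smul]
  refine (eq_top_iff' N).2 fun g => ?_
  obtain ⟨k, hk, hkx⟩ := exists_mem (g • x)
  have : k⁻¹ * g ∈ N := hN (by rw [mem_stabilizer_iff, mul_smul, ← hkx, inv_smul_smul])
  simpa using mul_mem hk this

theorem eq_bot_of_stabilizer_le_normalizer [FaithfulSMul G V] (hxy : Γ.Adj x y) {M : Subgroup G}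
    (hM : M ≤ edgeKernel G Γ x y)
    (hEM : normalizer (edgeKernel G Γ x y : Set G) ≤ normalizer (M : Set G))
    (hxM : stabilizer G x ≤ normalizer (M : Set G)) : M = ⊥ := by
  obtain ⟨t, htx, hty⟩ := h.exists_flip hxy
  have ht : t ∈ normalizer (edgeKernel G Γ x y : Set G) := by
    rw [mem_normalizer_iff_conj_smul_eq, h.smul_edgeKernel, htx, hty, edgeKernel_comm]
  have normalizer_eq_top := h.eq_top_of_stabilizer_le hxM (hEM ht) (by rwa [htx])
  have := normalizer_eq_top_iff.1 normalizer_eq_top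
  have := h.isPretransitive
  exact eq_bot_of_normal_of_le_stabilizer
    (hM.trans (inf_le_left.trans (localKernel_le_stabilizer (x := x))))

end IsArcTransitive

-- Frattini: `G_x = R G_{xy}` because `R` is transitive on `Γ(x)`.
theorem IsLocallySemiprimitive.eq_bot_of_le_normalizer [FaithfulSMul G V]
    (h : IsLocallySemiprimitive G Γ) (hxy : Γ.Adj x y) {M R : Subgroup G}
    (hM : M ≤ edgeKernel G Γ x y)
    (hEM : normalizer (edgeKernel G Γ x y : Set G) ≤ normalizer (M : Set G))
    (hR : NormalIn R (stabilizer G x)) (hRM : R ≤ normalizer (M : Set G))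
    (hRK : ¬ R ⊓ stabilizer G y ≤ localKernel G Γ x) : M = ⊥ := by
  refine h.toIsArcTransitive.eq_bot_of_stabilizer_le_normalizer hxy hM hEM fun g hg => ?_
  have hgy := h.smul_adj_smul g hxy
  rw [mem_stabilizer_iff.1 hg] at hgy
  obtain ⟨r, hr, hry⟩ := h.exists_mem_smul_eq hxy hR hRK hxy hgy
  have hrg : r⁻¹ * g ∈ stabilizer G x ⊓ stabilizer G y :=
    mem_inf.2 ⟨mul_mem (inv_mem (hR.le hr)) hg,
      by rw [mem_stabilizer_iff, mul_smul, ← hry, inv_smul_smul]⟩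
  simpa using mul_mem (hRM hr)
    (hEM ((h.toIsArcTransitive.edgeKernel_normalIn x y).le_normalizer hrg))

theorem IsArcTransitive.stabilizer_le_normalizer_iSup (h : IsArcTransitive G Γ)
    {F : V → Subgroup G} (hF : ∀ g ∈ stabilizer G x, ∀ z, MulAut.conj g • F z = F (g • z)) :
    stabilizer G x ≤ normalizer ((⨆ z ∈ Γ.neighborSet x, F z : Subgroup G) : Set G) := by
  refine le_normalizer_of_forall_smul_le fun g hg => ?_
  rw [pointwise_smul_subset_iff]
  refine iSup₂_le fun z hz => ?_
  rw [← pointwise_smul_subset_iff, hF g hg]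
  have hgz := h.smul_adj_smul g hz
  rw [mem_stabilizer_iff.1 hg] at hgz
  exact le_iSup₂_of_le (g • z) hgz le_rfl

section PCore

variable {p : ℕ}

theorem IsArcTransitive.pCore_localKernel_normalIn (h : IsArcTransitive G Γ) (p : ℕ) (x : V) :
    NormalIn (pCore p (localKernel G Γ x)) (stabilizer G x) :=
  (h.localKernel_normalIn x).of_equivariant (pCore_normalIn p _).le (smul_pCore p)

theorem IsArcTransitive.pCore_localKernel_eq_bot_of_le [FaithfulSMul G V]
    (h : IsArcTransitive G Γ) (hxy : Γ.Adj x y)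
    (hle : pCore p (localKernel G Γ x) ≤ localKernel G Γ y) :
    pCore p (localKernel G Γ x) = ⊥ := by
  have pCore_le : pCore p (localKernel G Γ x) ≤ edgeKernel G Γ x y :=
    le_inf (pCore_normalIn p _).le hle
  have pCore_eq := (h.edgeKernel_normalIn_localKernel hxy).pCore_eq pCore_le
  refine h.eq_bot_of_stabilizer_le_normalizer hxy pCore_le ?_
    (h.pCore_localKernel_normalIn p x).le_normalizer
  rw [pCore_eq]
  exact normalizer_le_normalizer_of_equivariant (smul_pCore p) _

theorem HasSymmetricArcQuotients.card_of_pCore_ne_bot [FaithfulSMul G V] {α : Type*} [Finite α]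
    (hsym : HasSymmetricArcQuotients G Γ α) (h : IsArcTransitive G Γ) (hxy : Γ.Adj x y)
    [Fact p.Prime] (hp : pCore p (localKernel G Γ x) ≠ ⊥) :
    (Nat.card α = 2 ∧ p = 2) ∨ (Nat.card α = 3 ∧ p = 3) ∨ (Nat.card α = 4 ∧ p = 2) := by
  let T := stabilizer G y ⊓ stabilizer G x
  obtain ⟨ψ, hψ, ker_eq⟩ := hsym hxy.symm
  have hPT : pCore p (localKernel G Γ x) ≤ T :=
    (pCore_normalIn p _).le.trans
      (le_inf (localKernel_le_stabilizer_of_adj hxy) localKernel_le_stabilizer)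
  let P := (pCore p (localKernel G Γ x)).subgroupOf T
  have isPGroup_P : IsPGroup p P := (isPGroup_pCore p _).comap_subtype
  have P_normal : P.Normal := normal_subgroupOf_of_le_normalizer
    (inf_le_right.trans (h.pCore_localKernel_normalIn p x).le_normalizer)
  have map_normal : (P.map ψ).Normal := P_normal.map ψ hψ
  refine perm_card_of_normal_of_isPGroup (isPGroup_P.map ψ) ?_
  rw [Ne, Subgroup.map_eq_bot_iff, ker_eq]
  refine fun hle => hp (h.pCore_localKernel_eq_bot_of_le hxy ?_)
  exact (comap_le_comap_of_le_range (by rwa [range_subtype])).1 hle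

theorem IsArcTransitive.pCore_le_normalizer_pResidual (h : IsArcTransitive G Γ)
    (hxy : Γ.Adj x y) (hyz : Γ.Adj y z) :
    pCore p (localKernel G Γ z) ≤ normalizer (pResidual p (edgeKernel G Γ y x) : Set G) := by
  set A := pCore p (localKernel G Γ z) ⊓ localKernel G Γ y
  have Kz_le : localKernel G Γ z ≤ normalizer (localKernel G Γ y : Set G) :=
    (localKernel_le_stabilizer_of_adj hyz.symm).trans (h.localKernel_normalIn y).le_normalizer
  have Ky_le : localKernel G Γ y ≤ normalizer (pCore p (localKernel G Γ z) : Set G) :=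
    (localKernel_le_stabilizer_of_adj hyz).trans (h.pCore_localKernel_normalIn p z).le_normalizer
  have A_le : A ≤ pCore p (localKernel G Γ y) := le_pCore
    ⟨inf_le_right, (le_inf Ky_le le_normalizer).trans inf_normalizer_le_normalizer_inf⟩
    ((isPGroup_pCore p _).to_le inf_le_left)
  refine le_normalizer_pResidual (isPGroup_pCore p (localKernel G Γ y)) ?_ ?_
  · exact (pCore_normalIn p _).le.trans (h.edgeKernel_normalIn_localKernel hxy.symm).le_normalizer
  · refine (le_inf ?_ ?_ : _ ≤ A).trans A_le
    · exact le_normalizer_iff_commutator_le_left.1 (inf_le_left.trans Ky_le)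
    · exact (commutator_mono (pCore_normalIn p _).le inf_le_left).trans
        (le_normalizer_iff_commutator_le_right.1 Kz_le)

theorem IsLocallySemiprimitive.isPGroup_edgeKernel [Finite G] [FaithfulSMul G V]
    (h : IsLocallySemiprimitive G Γ) (hxy : Γ.Adj x y) [Fact p.Prime]
    (hp : pCore p (localKernel G Γ x) ≠ ⊥) : IsPGroup p (edgeKernel G Γ y x) := by
  refine isPGroup_of_pResidual_eq_bot ?_
  set R := ⨆ z ∈ Γ.neighborSet y, pCore p (localKernel G Γ z)
  have R_normalIn : NormalIn R (stabilizer G y) := by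
    refine ⟨iSup₂_le fun z hz => ?_, h.stabilizer_le_normalizer_iSup fun g _ z => ?_⟩
    · exact (pCore_normalIn p _).le.trans (localKernel_le_stabilizer_of_adj (Γ.adj_symm hz))
    · rw [smul_pCore, h.smul_localKernel]
  have R_le_normalizer : R ≤ normalizer (pResidual p (edgeKernel G Γ y x) : Set G) :=
    iSup₂_le fun z hz => h.pCore_le_normalizer_pResidual hxy hz
  refine h.eq_bot_of_le_normalizer hxy.symm (pResidual_le p _)
    (normalizer_le_normalizer_of_equivariant (smul_pResidual p) _) R_normalIn R_le_normalizer ?_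
  intro hle
  refine hp (h.pCore_localKernel_eq_bot_of_le hxy ((le_inf ?_ ?_).trans hle))
  · exact le_iSup₂_of_le x hxy.symm le_rfl
  · exact (h.pCore_localKernel_normalIn p x).le

end PCore

section FittingFree

/-- The centraliser of `G_{xy}^{[1]}` in `G_x^{[1]}`. -/
def edgeCentralizer (G : Type*) {V : Type*} [Group G] [MulAction G V] (Γ : SimpleGraph V)
    (x y : V) : Subgroup G :=
  localKernel G Γ x ⊓ centralizer (edgeKernel G Γ x y : Set G)

theorem edgeCentralizer_inf_localKernel_eq_bot [Finite G] (h : IsArcTransitive G Γ)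
    (hfree : IsFittingFree (localKernel G Γ x)) (hxy : Γ.Adj x y) :
    edgeCentralizer G Γ x y ⊓ localKernel G Γ y = ⊥ := by
  rw [edgeCentralizer, inf_right_comm]
  exact hfree.inf_centralizer_eq_bot (h.edgeKernel_normalIn_localKernel hxy)

namespace IsArcTransitive

variable (h : IsArcTransitive G Γ)
include h

theorem edgeCentralizer_normalIn (hxy : Γ.Adj x y) :
    NormalIn (edgeCentralizer G Γ x y) (localKernel G Γ x) :=
  (h.edgeKernel_normalIn_localKernel hxy).inf_centralizer

theorem smul_edgeCentralizer (g : G) (x y : V) :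
    MulAut.conj g • edgeCentralizer G Γ x y = edgeCentralizer G Γ (g • x) (g • y) := by
  rw [edgeCentralizer, smul_inf, smul_centralizer, h.smul_localKernel, h.smul_edgeKernel,
    edgeCentralizer]

theorem edgeKernel_eq_bot_of_edgeCentralizer_eq_bot [Finite G] [FaithfulSMul G V]
    (hfree : IsFittingFree (localKernel G Γ x)) (hxy : Γ.Adj x y)
    (hC : edgeCentralizer G Γ x y = ⊥) : edgeKernel G Γ x y = ⊥ := by
  have core_eq := hfree.faithfulCore_eq ⟨h.edgeKernel_normalIn_localKernel hxy, hC⟩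
  have core_faithful := hfree.faithfulNormalIn_faithfulCore
  have core_le : faithfulCore (edgeKernel G Γ x y) ≤ edgeKernel G Γ x y :=
    ((hfree.of_normalIn
      (h.edgeKernel_normalIn_localKernel hxy)).faithfulNormalIn_faithfulCore).le
  have core_eq_bot : faithfulCore (localKernel G Γ x) = ⊥ := by
    refine h.eq_bot_of_stabilizer_le_normalizer hxy (core_eq.trans_le core_le) ?_
      ((h.localKernel_normalIn x).of_equivariant core_faithful.le smul_faithfulCore).le_normalizer
    rw [core_eq]
    exact normalizer_le_normalizer_of_equivariant smul_faithfulCore _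
  have localKernel_eq_bot := core_faithful.inf_centralizer
  rw [core_eq_bot, inf_eq_left.2 (le_centralizer_iff.1 bot_le)] at localKernel_eq_bot
  rw [edgeKernel, localKernel_eq_bot, bot_inf_eq]

end IsArcTransitive

namespace HasSymmetricArcQuotients

variable [Finite G] {α : Type*} [Finite α] (hsym : HasSymmetricArcQuotients G Γ α)
include hsym

theorem localKernel_inf_centralizer_eq (h : IsArcTransitive G Γ) (hxy : Γ.Adj x y)
    (hfree : IsFittingFree (localKernel G Γ x)) {B : Subgroup G}
    (hB : B ≤ edgeCentralizer G Γ x y) (hBK : NormalIn B (localKernel G Γ x)) (hne : B ≠ ⊥) :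
    localKernel G Γ x ⊓ centralizer (B : Set G) = edgeKernel G Γ x y := by
  obtain ⟨ψ, hψ, ker_eq⟩ := hsym hxy.symm
  have K_normalIn : NormalIn (localKernel G Γ x) (stabilizer G y ⊓ stabilizer G x) :=
    (h.localKernel_normalIn x).of_le
      (le_inf (localKernel_le_stabilizer_of_adj hxy) localKernel_le_stabilizer) inf_le_right
  exact hfree.inf_centralizer_eq_inf_of_ker_eq hψ ker_eq K_normalIn hB hBK hne

theorem edgeCentralizer_le_normalizer_edgeKernel (h : IsArcTransitive G Γ)
    (hfree : IsFittingFree (localKernel G Γ y)) (hxy : Γ.Adj x y) (hyz : Γ.Adj y z)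
    (hC : edgeCentralizer G Γ y z ≠ ⊥) :
    edgeCentralizer G Γ x y ≤ normalizer (edgeKernel G Γ y z : Set G) := by
  have hE := h.edgeKernel_normalIn_localKernel hxy.symm
  have hP := h.edgeCentralizer_normalIn hyz
  have C_le : edgeCentralizer G Γ x y ≤ centralizer (edgeKernel G Γ y x : Set G) :=
    inf_le_right.trans_eq (by rw [edgeKernel_comm])
  rcases eq_or_ne (edgeCentralizer G Γ y z ⊓ edgeKernel G Γ y x) ⊥ with hB | hB
  · have C_le_C : edgeCentralizer G Γ y z ≤ edgeCentralizer G Γ y x :=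
      le_inf hP.le (hP.le_centralizer_of_inf_eq_bot hE hB)
    have edgeKernel_eq : edgeKernel G Γ y z = edgeKernel G Γ y x :=
      (hsym.localKernel_inf_centralizer_eq h hyz hfree le_rfl hP hC).symm.trans
        (hsym.localKernel_inf_centralizer_eq h hxy.symm hfree C_le_C hP hC)
    rw [edgeKernel_eq]
    exact C_le.trans (centralizer_le_normalizer _)
  · rw [← hsym.localKernel_inf_centralizer_eq h hyz hfree inf_le_left (hP.inf hE) hB]
    have le_normalizer_K : edgeCentralizer G Γ x y ≤ normalizer (localKernel G Γ y : Set G) :=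
      inf_le_left.trans ((localKernel_le_stabilizer_of_adj hxy).trans
        (h.localKernel_normalIn y).le_normalizer)
    have le_normalizer_B := (C_le.trans (centralizer_le inf_le_right)).trans
      (centralizer_le_normalizer
        ((edgeCentralizer G Γ y z ⊓ edgeKernel G Γ y x : Subgroup G) : Set G))
    exact (le_inf le_normalizer_K (le_normalizer_B.trans
      (normalizer_le_normalizer_of_equivariant smul_centralizer _))).trans
        inf_normalizer_le_normalizer_inf

theorem edgeKernel_eq_bot [FaithfulSMul G V] (h : IsLocallySemiprimitive G Γ)
    (hfree : ∀ x, IsFittingFree (localKernel G Γ x)) (hxy : Γ.Adj x y) :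
    edgeKernel G Γ y x = ⊥ := by
  by_contra hE
  have centralizer_yx_ne_bot : edgeCentralizer G Γ y x ≠ ⊥ := fun hC =>
    hE (h.edgeKernel_eq_bot_of_edgeCentralizer_eq_bot (hfree y) hxy.symm hC)
  have centralizer_xy_ne_bot : edgeCentralizer G Γ x y ≠ ⊥ := fun hC =>
    hE ((edgeKernel_comm y x).trans
      (h.edgeKernel_eq_bot_of_edgeCentralizer_eq_bot (hfree x) hxy hC))
  let R := ⨆ z ∈ Γ.neighborSet y, edgeCentralizer G Γ z y
  have R_normalIn : NormalIn R (stabilizer G y) := by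
    refine ⟨iSup₂_le fun z hz => ?_, h.stabilizer_le_normalizer_iSup fun g hg z => ?_⟩
    · exact inf_le_left.trans (localKernel_le_stabilizer_of_adj (Γ.adj_symm hz))
    · rw [h.smul_edgeCentralizer, mem_stabilizer_iff.1 hg]
  have R_le_normalizer : R ≤ normalizer (edgeKernel G Γ y x : Set G) := iSup₂_le fun z hz =>
    hsym.edgeCentralizer_le_normalizer_edgeKernel h.toIsArcTransitive (hfree y) (Γ.adj_symm hz)
      hxy.symm centralizer_yx_ne_bot
  refine hE (h.eq_bot_of_le_normalizer hxy.symm le_rfl le_rfl R_normalIn R_le_normalizer ?_)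
  intro hle
  refine centralizer_xy_ne_bot ?_
  have P_le : edgeCentralizer G Γ x y ≤ R ⊓ stabilizer G x :=
    le_inf (le_iSup₂_of_le x hxy.symm le_rfl) (inf_le_left.trans localKernel_le_stabilizer)
  rw [← edgeCentralizer_inf_localKernel_eq_bot h.toIsArcTransitive (hfree x) hxy]
  exact (inf_eq_left.2 (P_le.trans hle)).symm

end HasSymmetricArcQuotients

end FittingFree

end LocalAction

section LocalActionIso

open Subgroup

variable {G V Λ X : Type*} [Group G] [MulAction G V] {Γ : SimpleGraph V} {x y : V} [Group Λ]
  [MulAction Λ X]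

/-- A permutation isomorphism between the action of `G_x` on `Γ(x)` and that of `Λ` on `X`: a
bijection `Γ(x) ≃ X` that is equivariant along a surjection `G_x →* Λ`. -/
structure LocalActionIso (G : Type*) {V : Type*} [Group G] [MulAction G V] (Γ : SimpleGraph V)
    (x : V) (Λ X : Type*) [Group Λ] [MulAction Λ X] where
  toEquiv : Γ.neighborSet x ≃ X
  toHom : stabilizer G x →* Λ
  toHom_surjective : Function.Surjective toHom
  smul_toEquiv_eq_iff : ∀ (g : stabilizer G x) (v w : Γ.neighborSet x),
    toHom g • toEquiv v = toEquiv w ↔ (g : G) • (v : V) = w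

namespace LocalActionIso

variable (i : LocalActionIso G Γ x Λ X)

theorem ker_toHom [FaithfulSMul Λ X] :
    i.toHom.ker = (localKernel G Γ x).subgroupOf (stabilizer G x) := by
  ext g
  rw [MonoidHom.mem_ker, mem_subgroupOf, mem_localKernel]
  refine ⟨fun hg => ⟨g.2, fun v hv => ?_⟩, fun hg => ?_⟩
  · exact (i.smul_toEquiv_eq_iff g ⟨v, hv⟩ ⟨v, hv⟩).1 (by rw [hg, one_smul])
  · refine FaithfulSMul.eq_of_smul_eq_smul (α := X) (i.toEquiv.surjective.forall.2 fun v => ?_)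
    rw [one_smul]
    exact (i.smul_toEquiv_eq_iff g v v).2 (hg.2 v v.2)

include i in
theorem exists_mem_stabilizer_smul_eq [IsPretransitive Λ X] {z w : V} (hz : Γ.Adj x z)
    (hw : Γ.Adj x w) : ∃ g ∈ stabilizer G x, g • z = w := by
  obtain ⟨σ, hσ⟩ := MulAction.exists_smul_eq Λ (i.toEquiv ⟨z, hz⟩) (i.toEquiv ⟨w, hw⟩)
  obtain ⟨g, rfl⟩ := i.toHom_surjective σ
  exact ⟨g, g.2, (i.smul_toEquiv_eq_iff g ⟨z, hz⟩ ⟨w, hw⟩).1 hσ⟩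

theorem exists_mem_smul_eq {R : Subgroup G}
    [IsPretransitive ((R.subgroupOf (stabilizer G x)).map i.toHom) X] {z w : V}
    (hz : Γ.Adj x z) (hw : Γ.Adj x w) : ∃ g ∈ R, g • z = w := by
  obtain ⟨⟨_, g, hg, rfl⟩, hgz⟩ := MulAction.exists_smul_eq
    ((R.subgroupOf (stabilizer G x)).map i.toHom) (i.toEquiv ⟨z, hz⟩) (i.toEquiv ⟨w, hw⟩)
  exact ⟨g, hg, (i.smul_toEquiv_eq_iff g ⟨z, hz⟩ ⟨w, hw⟩).1 hgz⟩

theorem exists_surjective_stabilizer [FaithfulSMul Λ X] (v : Γ.neighborSet x) :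
    ∃ f : (stabilizer G x ⊓ stabilizer G (v : V) : Subgroup G) →* stabilizer Λ (i.toEquiv v),
      Function.Surjective f ∧ f.ker = (localKernel G Γ x).subgroupOf _ := by
  let f := (i.toHom.comp (inclusion (inf_le_left (b := stabilizer G (v : V))))).codRestrict
    (stabilizer Λ (i.toEquiv v)) fun g => (i.smul_toEquiv_eq_iff _ v v).2 g.2.2
  refine ⟨f, ?_, ?_⟩
  · rintro ⟨σ, hσ⟩
    obtain ⟨g, rfl⟩ := i.toHom_surjective σ
    exact ⟨⟨g, g.2, (i.smul_toEquiv_eq_iff g v v).1 hσ⟩, rfl⟩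
  · refine (MonoidHom.ker_codRestrict _ _ _).trans ?_
    rw [← MonoidHom.comap_ker, i.ker_toHom]
    rfl

end LocalActionIso

theorem IsArcTransitive.isLocallySemiprimitive (h : IsArcTransitive G Γ) [FaithfulSMul Λ X]
    (hΛ : ∀ (N : Subgroup Λ) [N.Normal] (a : X), N ⊓ stabilizer Λ a ≠ ⊥ → IsPretransitive N X)
    (hloc : ∀ x, Nonempty (LocalActionIso G Γ x Λ X)) : IsLocallySemiprimitive G Γ := by
  refine ⟨h, fun x y R hxy hR hRK z w => ?_⟩
  obtain ⟨i⟩ := hloc x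
  have R_normal : (R.subgroupOf (stabilizer G x)).Normal :=
    normal_subgroupOf_of_le_normalizer hR.le_normalizer
  have map_normal := R_normal.map i.toHom i.toHom_surjective
  let v : Γ.neighborSet x := ⟨y, hxy⟩
  have := hΛ ((R.subgroupOf (stabilizer G x)).map i.toHom) (i.toEquiv v) fun inf_eq_bot => by
    refine hRK fun g hg => ?_
    let g' : stabilizer G x := ⟨g, hR.le hg.1⟩
    have mem_bot : i.toHom g' ∈ (⊥ : Subgroup Λ) := by
      rw [← inf_eq_bot]
      exact ⟨mem_map_of_mem _ hg.1, (i.smul_toEquiv_eq_iff g' v v).2 hg.2⟩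
    have mem_ker : g' ∈ i.toHom.ker := mem_bot
    rwa [i.ker_toHom] at mem_ker
  exact i.exists_mem_smul_eq

end LocalActionIso

namespace OPairs

variable {n : ℕ}

theorem smul_eq_self_iff {σ : Equiv.Perm (Fin n)} {z : OPairs n} :
    σ • z = z ↔ σ z.1.1 = z.1.1 ∧ σ z.1.2 = z.1.2 :=
  Subtype.ext_iff.trans Prod.ext_iff

theorem faithfulSMul (hn : 2 ≤ n) : FaithfulSMul (Equiv.Perm (Fin n)) (OPairs n) := by
  have : Nontrivial (Fin n) := Fin.nontrivial_iff_two_le.2 hn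
  refine ⟨fun {σ τ} h => Equiv.ext fun i => ?_⟩
  obtain ⟨j, hj⟩ := exists_ne i
  exact congr($(h ⟨(i, j), hj.symm⟩).1.1)

theorem isPretransitive (n : ℕ) : IsPretransitive (Equiv.Perm (Fin n)) (OPairs n) := by
  have := Equiv.Perm.isMultiplyPretransitive (Fin n) 2
  refine ⟨fun z w => ?_⟩
  obtain ⟨σ, hσ₁, hσ₂⟩ := is_two_pretransitive_iff.1 this z.2 w.2
  exact ⟨σ, Subtype.ext (Prod.ext hσ₁ hσ₂)⟩

theorem isPretransitive_of_alternatingGroup_le (hn : 4 ≤ n) {N : Subgroup (Equiv.Perm (Fin n))}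
    (hN : alternatingGroup (Fin n) ≤ N) : IsPretransitive N (OPairs n) := by
  refine ⟨fun z w => ?_⟩
  obtain ⟨σ, hσ, hσ₁, hσ₂⟩ :=
    exists_mem_alternatingGroup_apply_eq (by rwa [Nat.card_fin]) z.2 w.2
  exact ⟨⟨σ, hN hσ⟩, Subtype.ext (Prod.ext hσ₁ hσ₂)⟩

theorem isPretransitive_of_normal (hn : 4 ≤ n) (N : Subgroup (Equiv.Perm (Fin n))) [N.Normal]
    (z : OPairs n) (hz : N ⊓ stabilizer (Equiv.Perm (Fin n)) z ≠ ⊥) :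
    IsPretransitive N (OPairs n) := by
  obtain ⟨ρ, ⟨hρN, hρz⟩, hρ⟩ := (Subgroup.bot_or_exists_ne_one _).resolve_left hz
  exact isPretransitive_of_alternatingGroup_le hn
    (alternatingGroup_le_of_apply_eq_self hρN hρ (smul_eq_self_iff.1 hρz).1)

theorem range_ofSubtype (z : OPairs n) :
    (Equiv.Perm.ofSubtype (p := fun i => i ≠ z.1.1 ∧ i ≠ z.1.2)).range =
      stabilizer (Equiv.Perm (Fin n)) z := by
  ext σ
  rw [Equiv.Perm.mem_range_ofSubtype_iff, mem_stabilizer_iff, smul_eq_self_iff]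
  simp only [Set.subset_def, Finset.mem_coe, Equiv.Perm.mem_support, Set.mem_ofPred_eq]
  refine ⟨fun h => ⟨?_, ?_⟩, fun ⟨h₁, h₂⟩ i hi => ⟨?_, ?_⟩⟩
  · exact of_not_not fun hne => (h _ hne).1 rfl
  · exact of_not_not fun hne => (h _ hne).2 rfl
  · rintro rfl
    exact hi h₁
  · rintro rfl
    exact hi h₂

theorem nonempty_stabilizer_mulEquiv (z : OPairs n) :
    Nonempty (stabilizer (Equiv.Perm (Fin n)) z ≃* Equiv.Perm (Fin (n - 2))) := by
  have card_eq : Fintype.card {i // i ≠ z.1.1 ∧ i ≠ z.1.2} = n - 2 := by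
    rw [Fintype.card_subtype]
    have : (Finset.univ.filter fun i => i ≠ z.1.1 ∧ i ≠ z.1.2) = {z.1.1, z.1.2}ᶜ := by
      ext i; simp
    rw [this, Finset.card_compl, Finset.card_pair z.2, Fintype.card_fin]
  have ofSubtype_equiv := MonoidHom.ofInjective
    (Equiv.Perm.ofSubtype_injective (p := fun i => i ≠ z.1.1 ∧ i ≠ z.1.2))
  rw [range_ofSubtype] at ofSubtype_equiv
  exact ⟨ofSubtype_equiv.symm.trans (Fintype.equivFinOfCardEq card_eq).permCongrHom⟩

end OPairs

namespace IsLocallyOPairs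

variable {n : ℕ} {V : Type*} {Γ : SimpleGraph V} {G : Subgroup (Equiv.Perm V)}
  (hloc : IsLocallyOPairs n Γ G)
include hloc

theorem nonempty_localActionIso (x : V) :
    Nonempty (LocalActionIso G Γ x (Equiv.Perm (Fin n)) (OPairs n)) := by
  obtain ⟨e, φ, hφ, he⟩ := hloc.2.2 x
  refine ⟨⟨e, φ, hφ, fun g v w => ?_⟩⟩
  rw [← Equiv.symm_apply_eq, Subtype.ext_iff, he]
  rfl

theorem isArcTransitive (hconn : Γ.Connected) : IsArcTransitive G Γ := by
  refine ⟨hconn, fun g u v => (hloc.1 g g.2 u v).1, hloc.2.1, fun x y z hxy hxz => ?_⟩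
  obtain ⟨i⟩ := hloc.nonempty_localActionIso x
  have := OPairs.isPretransitive n
  exact i.exists_mem_stabilizer_smul_eq hxy hxz

theorem isLocallySemiprimitive (hn : 4 ≤ n) (hconn : Γ.Connected) :
    IsLocallySemiprimitive G Γ := by
  have := OPairs.faithfulSMul (show 2 ≤ n by omega)
  exact (hloc.isArcTransitive hconn).isLocallySemiprimitive
    (fun N _ => OPairs.isPretransitive_of_normal hn N) hloc.nonempty_localActionIso

theorem hasSymmetricArcQuotients (hn : 2 ≤ n) : HasSymmetricArcQuotients G Γ (Fin (n - 2)) := by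
  intro x y hxy
  have := OPairs.faithfulSMul hn
  obtain ⟨i⟩ := hloc.nonempty_localActionIso x
  obtain ⟨f, hf, ker_f⟩ := i.exists_surjective_stabilizer ⟨y, hxy⟩
  obtain ⟨θ⟩ := OPairs.nonempty_stabilizer_mulEquiv (i.toEquiv ⟨y, hxy⟩)
  exact ⟨θ.toMonoidHom.comp f, θ.surjective.comp hf,
    (MonoidHom.ker_comp_of_injective f θ.toMonoidHom θ.injective).trans ker_f⟩

end IsLocallyOPairs

theorem ballStab_one {V : Type*} {Γ : SimpleGraph V} (hconn : Γ.Connected)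
    (G : Subgroup (Equiv.Perm V)) (x : V) : ballStab Γ G x 1 = localKernel G Γ x := by
  ext g
  simp only [ballStab, Subgroup.mem_iInf, mem_stabilizer_iff, mem_localKernel]
  refine ⟨fun h => ⟨h x (by simp), fun v hv => h v (SimpleGraph.dist_eq_one_iff_adj.2 hv).le⟩,
    fun ⟨hx, h⟩ v hv => ?_⟩
  rcases Nat.le_one_iff_eq_zero_or_eq_one.1 hv with hv | hv
  · rwa [← hconn.dist_eq_zero_iff.1 hv]
  · exact h v (SimpleGraph.dist_eq_one_iff_adj.1 hv)

/-- if `(Γ,G)` is locally `L` for `L` the group induced by `Sym(n)` on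
ordered pairs of distinct elements (`n ≥ 4`) and `G_{xy}^{[1]} ≠ 1` for an edge `{x,y}`,
then `G_{xy}^{[1]}` is a `p`-group for a prime `p` with `(n,p) ∈ {(4,2),(5,3),(6,2)}`. -/
theorem stmt_8 {V : Type*} [Fintype V] (n : ℕ) (hn : 4 ≤ n)
    (Γ : SimpleGraph V) (hconn : Γ.Connected)
    (G : Subgroup (Equiv.Perm V)) (hloc : IsLocallyOPairs n Γ G)
    (x y : V) (hxy : Γ.Adj x y)
    (hne : ballStab Γ G x 1 ⊓ ballStab Γ G y 1 ≠ ⊥) :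
    ∃ p : ℕ, p.Prime ∧
      ((n = 4 ∧ p = 2) ∨ (n = 5 ∧ p = 3) ∨ (n = 6 ∧ p = 2)) ∧
      IsPGroup p ↥(ballStab Γ G x 1 ⊓ ballStab Γ G y 1) := by
  have hsemi := hloc.isLocallySemiprimitive hn hconn
  have hsym := hloc.hasSymmetricArcQuotients (by omega)
  rw [ballStab_one hconn, ballStab_one hconn, ← edgeKernel, edgeKernel_comm] at hne ⊢
  obtain ⟨p, hp, pCore_ne_bot⟩ : ∃ p : ℕ, p.Prime ∧ pCore p (localKernel G Γ x) ≠ ⊥ := by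
    by_contra! hfree
    refine hne (hsym.edgeKernel_eq_bot hsemi (fun v => ?_) hxy)
    obtain ⟨g, rfl⟩ := hloc.2.1.exists_smul_eq x v
    rw [← hsemi.smul_localKernel]
    exact IsFittingFree.smul hfree _
  have : Fact p.Prime := ⟨hp⟩
  refine ⟨p, hp, ?_, hsemi.isPGroup_edgeKernel hxy pCore_ne_bot⟩
  have card_eq := hsym.card_of_pCore_ne_bot hsemi.toIsArcTransitive hxy pCore_ne_bot
  rw [Nat.card_fin] at card_eq
  omega
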